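/- Let τ ∈ ℝ_{<0}. There exists a meromorphic function on ℂ, again denoted G_τ, which agrees with G_τ(z) = exp(i·γ_τ(z)) on the strip |Re(z)| < 1 − τ^{-1} and satisfies G_τ(z+2) = 2·cos(π(z+1)τ/2)·G_τ(z) on all of ℂ. Moreover the zeros of this meromorphic function are located exactly at the points 1 − τ^{-1} + 2k + 2τ^{-1}l with k ∈ ℤ_{≥0} and l ∈ ℤ_{≤0}, and its poles are located exactly at the points −1 + τ^{-1} + 2k + 2τ^{-1}l with k ∈ ℤ_{≤0} and l ∈ ℤ_{≥0}. -/

import Mathlib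

noncomputable section

open Complex MeasureTheory Set Filter Topology

/-- The integrand of Ruijsenaars' hyperbolic gamma function. -/
def hypInt (τ : ℝ) (z : ℂ) (y : ℝ) : ℂ :=
  (z / (y : ℂ) -
      Complex.sinh ((τ : ℂ) * (y : ℂ) * z) /
        (Complex.sinh (y : ℂ) * Complex.sinh ((τ : ℂ) * (y : ℂ)))) / (y : ℂ)

/-- `γ_τ(z) = (1/(2i))·∫_0^∞ ( z/y − sinh(τyz)/(sinh(y)·sinh(τy)) ) dy/y`. -/
def hypGammaArg (τ : ℝ) (z : ℂ) : ℂ :=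
  (2 * Complex.I)⁻¹ * ∫ y in Set.Ioi (0 : ℝ), hypInt τ z y

/-- `G_τ(z) = exp(i·γ_τ(z))` on the strip `|Re z| < 1 − τ⁻¹`. -/
def hypGammaStrip (τ : ℝ) (z : ℂ) : ℂ := Complex.exp (Complex.I * hypGammaArg τ z)

/-- The zero set `1 − τ⁻¹ + 2ℤ_{≥0} + 2τ⁻¹ℤ_{≤0}` of the hyperbolic gamma function. -/
def hypZeros (τ : ℝ) : Set ℂ :=
  {z : ℂ | ∃ k l : ℤ, 0 ≤ k ∧ l ≤ 0 ∧
    z = 1 - ((τ : ℂ))⁻¹ + 2 * (k : ℂ) + 2 * ((τ : ℂ))⁻¹ * (l : ℂ)}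

/-- The pole set `−1 + τ⁻¹ + 2ℤ_{≤0} + 2τ⁻¹ℤ_{≥0}` of the hyperbolic gamma function. -/
def hypPoles (τ : ℝ) : Set ℂ :=
  {z : ℂ | ∃ k l : ℤ, k ≤ 0 ∧ 0 ≤ l ∧
    z = -1 + ((τ : ℂ))⁻¹ + 2 * (k : ℂ) + 2 * ((τ : ℂ))⁻¹ * (l : ℂ)}

/-!
The integral converges absolutely and locally uniformly on the strip `|Re z| < 1 - τ⁻¹`, so
`G_τ` is holomorphic and zero-free there, and `G_τ(-z) = G_τ(z)⁻¹` as the integrand is odd in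
`z`. Subtracting the integrals for `z + 1` and `z - 1` cancels one factor `sinh (τy)` and leaves
`F(w) = ∫₀^∞ (1/y - cosh (yw) / sinh y) dy/y` with `w = τz`. Here
`F'(w) = -∫₀^∞ sinh (yw) / sinh y dy = -(π/2) tan (πw/2)`, by expanding `1 / sinh y` in a
geometric series and recognising the Mittag-Leffler expansion of the cotangent. Hence `exp F(w)`
is a constant multiple of `cos (πw/2)`, and the duplication formula
`F(w) = F((w + 1)/2) + F((w - 1)/2)` fixes the constant to be `2`. This is the difference
equation on the strip. Since the strip is wider than `2`, the equation continues `G_τ` to a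
half-plane, with zeros coming only from those of the cosine, and `G_τ(-z) = G_τ(z)⁻¹` gives the
remaining half-plane and turns zeros into poles.
-/

/-! ### Differentiation under the integral sign -/

theorem hasDerivAt_integral_of_forall_ball_norm_le {α E : Type*} [MeasurableSpace α]
    [NormedAddCommGroup E] [NormedSpace ℂ E] {μ : Measure α} {F : ℂ → α → E} {b : α → ℝ} {z : ℂ}
    {ε : ℝ} (hε : 0 < ε) (hF_meas : ∀ w, AEStronglyMeasurable (F w) μ)
    (hF_diff : ∀ᵐ a ∂μ, DifferentiableOn ℂ (F · a) (Metric.ball z ε))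
    (hF_le : ∀ᵐ a ∂μ, ∀ w ∈ Metric.ball z ε, ‖F w a‖ ≤ b a) (hb : Integrable b μ) :
    Integrable (fun a ↦ deriv (F · a) z) μ ∧
      HasDerivAt (fun w ↦ ∫ a, F w a ∂μ) (∫ a, deriv (F · a) z ∂μ) z := by
  have hz : z ∈ Metric.ball z ε := Metric.mem_ball_self hε
  have hF_int : Integrable (F z) μ := hb.mono' (hF_meas z) (hF_le.mono fun a h ↦ h z hz)
  have hF'_meas : AEStronglyMeasurable (fun a ↦ deriv (F · a) z) μ := by
    refine aestronglyMeasurable_of_tendsto_ae (𝓝[≠] (0 : ℂ))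
      (fun t ↦ ((hF_meas (z + t)).sub (hF_meas z)).const_smul t⁻¹) ?_
    filter_upwards [hF_diff] with a ha
    exact (ha.differentiableAt (Metric.isOpen_ball.mem_nhds hz)).hasDerivAt.tendsto_slope_zero
  have closedBall_subset {w : ℂ} (hw : w ∈ Metric.ball z (ε / 2)) :
      Metric.closedBall w (ε / 2) ⊆ Metric.ball z ε :=
    Metric.closedBall_subset_ball' (by rw [Metric.mem_ball] at hw; linarith)
  refine hasDerivAt_integral_of_dominated_loc_of_deriv_le (bound := fun a ↦ b a / (ε / 2))
    (F' := fun w a ↦ deriv (F · a) w) (Metric.ball_mem_nhds z (half_pos hε))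
    (Eventually.of_forall hF_meas) hF_int hF'_meas ?_ (hb.div_const _) ?_
  · filter_upwards [hF_diff, hF_le] with a hdiff hle w hw
    exact norm_deriv_le_of_forall_mem_sphere_norm_le (half_pos hε)
      (hdiff.diffContOnCl_ball (closedBall_subset hw))
      fun v hv ↦ hle v (closedBall_subset hw (Metric.sphere_subset_closedBall hv))
  · filter_upwards [hF_diff] with a hdiff w hw
    exact (hdiff.differentiableAt (Metric.isOpen_ball.mem_nhds
      (Metric.ball_subset_ball (half_le_self hε.le) hw))).hasDerivAt

/-! ### Estimates for the integrand of `γ_τ` -/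

theorem norm_sinh_le_norm_mul_exp (u : ℂ) : ‖sinh u‖ ≤ ‖u‖ * Real.exp ‖u‖ := by
  have hpos := norm_exp_sub_sum_le_norm_mul_exp u 1
  have hneg := norm_exp_sub_sum_le_norm_mul_exp (-u) 1
  simp only [Finset.sum_range_one, pow_zero, Nat.factorial_zero, Nat.cast_one, div_one, pow_one,
    norm_neg] at hpos hneg
  have hsinh : sinh u = ((exp u - 1) - (exp (-u) - 1)) / 2 := by rw [sinh]; ring
  rw [hsinh, norm_div, norm_ofNat]
  linarith [norm_sub_le (exp u - 1) (exp (-u) - 1)]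

theorem norm_sinh_sub_self_le (u : ℂ) : ‖sinh u - u‖ ≤ ‖u‖ ^ 3 * Real.exp ‖u‖ := by
  have hpos := norm_exp_sub_sum_le_norm_mul_exp u 3
  have hneg := norm_exp_sub_sum_le_norm_mul_exp (-u) 3
  rw [norm_neg] at hneg
  set S : ℂ → ℂ := fun v ↦ ∑ m ∈ Finset.range 3, v ^ m / m.factorial with hS
  have hsinh : sinh u - u = ((exp u - S u) - (exp (-u) - S (-u))) / 2 := by
    simp only [hS, Finset.sum_range_succ, Finset.sum_range_zero, sinh, Nat.factorial]
    push_cast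
    ring
  rw [hsinh, norm_div, norm_ofNat]
  linarith [norm_sub_le (exp u - S u) (exp (-u) - S (-u))]

theorem norm_sinh_mul_sinh_sub_mul_le (u v : ℂ) :
    ‖sinh u * sinh v - u * v‖ ≤
      ‖u‖ * ‖v‖ * (‖u‖ ^ 2 + ‖v‖ ^ 2) * Real.exp (‖u‖ + ‖v‖) := by
  have hexp : Real.exp ‖v‖ ≤ Real.exp (‖u‖ + ‖v‖) :=
    Real.exp_le_exp.2 (le_add_of_nonneg_left (norm_nonneg u))
  calc ‖sinh u * sinh v - u * v‖ = ‖(sinh u - u) * sinh v + u * (sinh v - v)‖ := by ring_nf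
    _ ≤ ‖sinh u - u‖ * ‖sinh v‖ + ‖u‖ * ‖sinh v - v‖ := by
      simpa only [norm_mul] using norm_add_le ((sinh u - u) * sinh v) (u * (sinh v - v))
    _ ≤ ‖u‖ ^ 3 * Real.exp ‖u‖ * (‖v‖ * Real.exp ‖v‖) + ‖u‖ * (‖v‖ ^ 3 * Real.exp ‖v‖) := by
      gcongr
      exacts [norm_sinh_sub_self_le u, norm_sinh_le_norm_mul_exp v, norm_sinh_sub_self_le v]
    _ = ‖u‖ ^ 3 * ‖v‖ * Real.exp (‖u‖ + ‖v‖) + ‖u‖ * ‖v‖ ^ 3 * Real.exp ‖v‖ := by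
      rw [Real.exp_add]; ring
    _ ≤ ‖u‖ ^ 3 * ‖v‖ * Real.exp (‖u‖ + ‖v‖) + ‖u‖ * ‖v‖ ^ 3 * Real.exp (‖u‖ + ‖v‖) := by
      gcongr
    _ = _ := by ring

theorem norm_sinh_le_exp_abs_re (u : ℂ) : ‖sinh u‖ ≤ Real.exp |u.re| := by
  have hpos : ‖exp u‖ ≤ Real.exp |u.re| := by
    rw [norm_exp]; exact Real.exp_le_exp.2 (le_abs_self _)
  have hneg : ‖exp (-u)‖ ≤ Real.exp |u.re| := by
    rw [norm_exp, neg_re]; exact Real.exp_le_exp.2 (neg_le_abs _)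
  rw [sinh, norm_div, norm_ofNat]
  linarith [norm_sub_le (exp u) (exp (-u))]

theorem one_sub_exp_div_two_mul_exp_le_norm_sinh {x₀ x : ℝ} (h : x₀ ≤ x) :
    (1 - Real.exp (-2 * x₀)) / 2 * Real.exp x ≤ ‖sinh (x : ℂ)‖ := by
  have hexp : Real.exp (-x) ≤ Real.exp (-2 * x₀) * Real.exp x := by
    rw [← Real.exp_add]
    exact Real.exp_le_exp.2 (by linarith)
  rw [← ofReal_sinh, norm_real]
  refine le_trans ?_ (Real.le_norm_self _)
  rw [Real.sinh_eq]
  linarith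

theorem sinh_ofReal_ne_zero {y : ℝ} (hy : y ≠ 0) : sinh (y : ℂ) ≠ 0 := by
  rw [← ofReal_sinh]
  exact_mod_cast Real.sinh_ne_zero.2 hy

theorem sinh_ofReal_mul_ofReal_ne_zero {a y : ℝ} (ha : a ≠ 0) (hy : y ≠ 0) :
    sinh ((a : ℂ) * y) ≠ 0 := by
  rw [← ofReal_mul]
  exact sinh_ofReal_ne_zero (mul_ne_zero ha hy)

theorem hypInt_neg_left (a : ℝ) (z : ℂ) : hypInt (-a) z = hypInt a z := by
  funext y
  simp only [hypInt, ofReal_neg, neg_mul, sinh_neg, mul_neg, neg_div_neg_eq]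

theorem hypInt_neg_right (a : ℝ) (z : ℂ) : hypInt a (-z) = -hypInt a z := by
  funext y
  simp only [hypInt, Pi.neg_apply, mul_neg, sinh_neg]
  ring

theorem differentiable_hypInt (a y : ℝ) : Differentiable ℂ (hypInt a · y) := by
  unfold hypInt
  simp only [div_eq_mul_inv]
  fun_prop

theorem continuousOn_hypInt {a : ℝ} (ha : a ≠ 0) (z : ℂ) : ContinuousOn (hypInt a z) {0}ᶜ := by
  have hy (y : ℝ) (hy : y ∈ ({0}ᶜ : Set ℝ)) : (y : ℂ) ≠ 0 := ofReal_ne_zero.2 hy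
  refine ((continuousOn_const.div (by fun_prop) hy).sub
    (ContinuousOn.div (by fun_prop) (by fun_prop) ?_)).div (by fun_prop) hy
  exact fun y hy ↦ mul_ne_zero (sinh_ofReal_ne_zero hy) (sinh_ofReal_mul_ofReal_ne_zero ha hy)

theorem aestronglyMeasurable_hypInt {a : ℝ} (ha : a ≠ 0) (z : ℂ) :
    AEStronglyMeasurable (hypInt a z) (volume.restrict (Ioi 0)) :=
  ((continuousOn_hypInt ha z).mono fun _ hy ↦ (mem_Ioi.1 hy).ne').aestronglyMeasurable
    measurableSet_Ioi

theorem hypInt_eq_div {a y : ℝ} (ha : a ≠ 0) (hy : y ≠ 0) (z : ℂ) :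
    hypInt a z y =
      (z * (sinh y * sinh (a * y) - y * (a * y)) - y * (sinh (a * y * z) - a * y * z)) /
        (y ^ 2 * (sinh y * sinh (a * y))) := by
  have hy' : (y : ℂ) ≠ 0 := ofReal_ne_zero.2 hy
  have hs := sinh_ofReal_ne_zero hy
  have hs' := sinh_ofReal_mul_ofReal_ne_zero ha hy
  rw [hypInt]
  generalize sinh (y : ℂ) = s, sinh ((a : ℂ) * y) = s' at *
  field_simp
  ring

section Bounds

variable {a : ℝ}

theorem mul_pow_four_le_norm_sq_mul_sinh_mul_sinh (ha : 0 ≤ a) {y : ℝ} (hy : 0 ≤ y) :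
    a * y ^ 4 ≤ ‖(y ^ 2 * (sinh y * sinh (a * y)) : ℂ)‖ := by
  have hay : 0 ≤ a * y := mul_nonneg ha hy
  have hnorm {x : ℝ} (hx : 0 ≤ x) : x ≤ ‖sinh (x : ℂ)‖ := by
    rw [← ofReal_sinh, norm_real]
    exact (Real.self_le_sinh_iff.2 hx).trans (Real.le_norm_self _)
  calc a * y ^ 4 = y ^ 2 * (y * (a * y)) := by ring
    _ ≤ y ^ 2 * (‖sinh (y : ℂ)‖ * ‖sinh ((a * y : ℝ) : ℂ)‖) := by
      gcongr
      exacts [hnorm hy, hnorm hay]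
    _ = _ := by simp [abs_of_nonneg hy]

theorem exists_forall_norm_hypInt_le_of_le_one (ha : 0 < a) (R : ℝ) :
    ∃ C : ℝ, ∀ (z : ℂ) (y : ℝ), ‖z‖ ≤ R → 0 < y → y ≤ 1 → ‖hypInt a z y‖ ≤ C := by
  refine ⟨(R * (a * (1 + a ^ 2) * Real.exp (1 + a)) + (a * R) ^ 3 * Real.exp (a * R)) / a,
    fun z y hz hy hy1 ↦ ?_⟩
  have hR : 0 ≤ R := (norm_nonneg z).trans hz
  have hnorm_y : ‖(y : ℂ)‖ = y := Complex.norm_of_nonneg hy.le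
  have hnorm_ay : ‖(a * y : ℂ)‖ = a * y := by rw [norm_mul, Complex.norm_of_nonneg ha.le, hnorm_y]
  have hay : a * y ≤ a := mul_le_of_le_one_right ha.le hy1
  have hprod : ‖sinh y * sinh (a * y) - y * (a * y)‖ ≤
      a * (1 + a ^ 2) * Real.exp (1 + a) * y ^ 4 := by
    calc ‖sinh y * sinh (a * y) - y * (a * y)‖
        ≤ y * (a * y) * (y ^ 2 + (a * y) ^ 2) * Real.exp (y + a * y) := by
          simpa only [hnorm_y, hnorm_ay] using norm_sinh_mul_sinh_sub_mul_le (y : ℂ) (a * y)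
      _ ≤ y * (a * y) * (y ^ 2 + (a * y) ^ 2) * Real.exp (1 + a) := by gcongr
      _ = _ := by ring
  have hsinh : ‖sinh (a * y * z) - a * y * z‖ ≤ (a * R) ^ 3 * Real.exp (a * R) * y ^ 3 := by
    have hu : ‖(a * y * z : ℂ)‖ ≤ a * y * R := by rw [norm_mul, hnorm_ay]; gcongr
    calc ‖sinh (a * y * z) - a * y * z‖
        ≤ ‖(a * y * z : ℂ)‖ ^ 3 * Real.exp ‖(a * y * z : ℂ)‖ := norm_sinh_sub_self_le _
      _ ≤ (a * y * R) ^ 3 * Real.exp (a * R) := by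
          gcongr
          exact hu.trans (by gcongr)
      _ = _ := by ring
  rw [hypInt_eq_div ha.ne' hy.ne', norm_div]
  calc _ ≤ (R * (a * (1 + a ^ 2) * Real.exp (1 + a) * y ^ 4) +
          y * ((a * R) ^ 3 * Real.exp (a * R) * y ^ 3)) / (a * y ^ 4) := by
        gcongr
        · refine (norm_sub_le _ _).trans ?_
          rw [norm_mul, norm_mul, hnorm_y]
          gcongr
        · exact mul_pow_four_le_norm_sq_mul_sinh_mul_sinh ha.le hy.le
    _ = _ := by field_simp

theorem exists_forall_norm_hypInt_le_of_one_le (ha : 0 < a) :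
    ∃ C : ℝ, ∀ (z : ℂ) (R r y : ℝ), ‖z‖ ≤ R → |z.re| ≤ r → 1 ≤ y →
      ‖hypInt a z y‖ ≤ R * y ^ (-2 : ℝ) + C * Real.exp (-(1 + a - a * r) * y) := by
  set k₁ := (1 - Real.exp (-2 * 1)) / 2
  set k₂ := (1 - Real.exp (-2 * a)) / 2
  have hk₁ : 0 < k₁ := half_pos (sub_pos.2 (Real.exp_lt_one_iff.2 (by norm_num)))
  have hk₂ : 0 < k₂ := half_pos (sub_pos.2 (Real.exp_lt_one_iff.2 (by linarith)))
  refine ⟨(k₁ * k₂)⁻¹, fun z R r y hz hzr hy ↦ ?_⟩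
  have hy0 : 0 < y := one_pos.trans_le hy
  have hay : 0 < a * y := mul_pos ha hy0
  have hsinh_y : k₁ * Real.exp y ≤ ‖sinh (y : ℂ)‖ := one_sub_exp_div_two_mul_exp_le_norm_sinh hy
  have hsinh_ay : k₂ * Real.exp (a * y) ≤ ‖sinh (a * y : ℂ)‖ := by
    rw [← ofReal_mul]
    exact one_sub_exp_div_two_mul_exp_le_norm_sinh (le_mul_of_one_le_right ha.le hy)
  have hsinh_z : ‖sinh (a * y * z)‖ ≤ Real.exp (a * y * r) := by
    refine (norm_sinh_le_exp_abs_re _).trans (Real.exp_le_exp.2 ?_)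
    rw [← ofReal_mul, re_ofReal_mul, abs_mul, abs_of_pos hay]
    gcongr
  calc ‖hypInt a z y‖ = ‖z / y ^ 2 - sinh (a * y * z) / (y * (sinh y * sinh (a * y)))‖ := by
        rw [hypInt, sub_div, div_div, div_div, sq, mul_comm (y : ℂ) (_ * _)]
    _ ≤ ‖z‖ / y ^ 2 + ‖sinh (a * y * z)‖ / (y * (‖sinh (y : ℂ)‖ * ‖sinh (a * y : ℂ)‖)) := by
        refine (norm_sub_le _ _).trans_eq ?_
        simp only [norm_div, norm_mul, norm_pow, Complex.norm_of_nonneg hy0.le]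
    _ ≤ R / y ^ 2 +
        Real.exp (a * y * r) / (1 * ((k₁ * Real.exp y) * (k₂ * Real.exp (a * y)))) := by gcongr
    _ = R * y ^ (-2 : ℝ) +
        (k₁ * k₂)⁻¹ * (Real.exp (a * y * r) / (Real.exp y * Real.exp (a * y))) := by
        rw [Real.rpow_neg hy0.le, Real.rpow_two]
        field_simp
    _ = _ := by rw [← Real.exp_add, ← Real.exp_sub]; ring_nf

theorem exists_integrableOn_forall_norm_hypInt_le (ha : 0 < a) (R : ℝ) {r : ℝ}
    (hr : r < 1 + a⁻¹) :
    ∃ b : ℝ → ℝ, IntegrableOn b (Ioi 0) ∧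
      ∀ z : ℂ, ‖z‖ ≤ R → |z.re| ≤ r → ∀ y ∈ Ioi (0 : ℝ), ‖hypInt a z y‖ ≤ b y := by
  have hdecay : 0 < 1 + a - a * r := by
    have : a * r < a * (1 + a⁻¹) := by gcongr
    have : a * (1 + a⁻¹) = 1 + a := by field_simp; ring
    linarith
  obtain ⟨C₀, hC₀⟩ := exists_forall_norm_hypInt_le_of_le_one ha R
  obtain ⟨C₁, hC₁⟩ := exists_forall_norm_hypInt_le_of_one_le ha
  set b₁ : ℝ → ℝ := fun y ↦ R * y ^ (-2 : ℝ) + C₁ * Real.exp (-(1 + a - a * r) * y)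
  have hb₁ : IntegrableOn b₁ (Ioi 1) :=
    ((integrableOn_Ioi_rpow_of_lt (by norm_num) one_pos).const_mul R).add
      ((exp_neg_integrableOn_Ioi 1 hdecay).const_mul _)
  refine ⟨fun y ↦ if y ≤ 1 then C₀ else b₁ y, ?_, fun z hz hzr y hy ↦ ?_⟩
  · rw [← Ioc_union_Ioi_eq_Ioi zero_le_one]
    refine IntegrableOn.union ?_ ?_
    · exact (integrableOn_const (by simp)).congr_fun (fun y hy ↦ (if_pos hy.2).symm)
        measurableSet_Ioc
    · exact hb₁.congr_fun (fun y hy ↦ (if_neg (not_le.2 hy)).symm) measurableSet_Ioi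
  · dsimp only
    split_ifs with hy1
    · exact hC₀ z y hz hy hy1
    · exact hC₁ z R r y hz hzr (not_le.1 hy1).le

theorem integrableOn_hypInt (ha : 0 < a) {z : ℂ} (hz : |z.re| < 1 + a⁻¹) :
    IntegrableOn (hypInt a z) (Ioi 0) := by
  obtain ⟨b, hb, hle⟩ := exists_integrableOn_forall_norm_hypInt_le ha ‖z‖ hz
  exact hb.mono' (aestronglyMeasurable_hypInt ha.ne' z)
    (ae_restrict_of_forall_mem measurableSet_Ioi (hle z le_rfl le_rfl))

end Bounds

theorem norm_le_norm_add_of_mem_ball {z w : ℂ} {ε : ℝ} (hw : w ∈ Metric.ball z ε) :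
    ‖w‖ ≤ ‖z‖ + ε := by
  have := norm_le_norm_add_norm_sub' w z
  rw [mem_ball_iff_norm] at hw
  linarith

theorem abs_re_le_abs_re_add_of_mem_ball {z w : ℂ} {ε : ℝ} (hw : w ∈ Metric.ball z ε) :
    |w.re| ≤ |z.re| + ε := by
  have hre := abs_re_le_norm (w - z)
  rw [mem_ball_iff_norm] at hw
  rw [sub_re] at hre
  linarith [abs_sub_abs_le_abs_sub w.re z.re]

theorem hasDerivAt_integral_hypInt {a : ℝ} (ha : 0 < a) {z : ℂ} (hz : |z.re| < 1 + a⁻¹) :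
    IntegrableOn (fun y ↦ deriv (hypInt a · y) z) (Ioi 0) ∧
      HasDerivAt (fun w ↦ ∫ y in Ioi (0 : ℝ), hypInt a w y)
        (∫ y in Ioi (0 : ℝ), deriv (hypInt a · y) z) z := by
  obtain ⟨s, hzs, hs⟩ := exists_between hz
  set ε := s - |z.re|
  obtain ⟨b, hb, hle⟩ := exists_integrableOn_forall_norm_hypInt_le ha (‖z‖ + ε) hs
  refine hasDerivAt_integral_of_forall_ball_norm_le (sub_pos.2 hzs)
    (aestronglyMeasurable_hypInt ha.ne')
    (Eventually.of_forall fun y ↦ (differentiable_hypInt a y).differentiableOn)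
    (ae_restrict_of_forall_mem measurableSet_Ioi fun y hy w hw ↦ ?_) hb
  refine hle w (norm_le_norm_add_of_mem_ball hw) ?_ y hy
  simpa only [ε, add_sub_cancel] using abs_re_le_abs_re_add_of_mem_ball hw

/-! ### The elementary integral -/

/-- The integrand of `logTwoCosIntegral`. -/
def logTwoCosKernel (w : ℂ) (y : ℝ) : ℂ := (1 / y - cosh (y * w) / sinh y) / y

/-- The elementary integral `∫₀^∞ (1/y - cosh (yw) / sinh y) dy/y`, to which the difference
`i γ_τ(z + 1) - i γ_τ(z - 1)` reduces with `w = τz`; it is a logarithm of `2 cos (πw/2)` on the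
strip `|Re w| < 1`. -/
def logTwoCosIntegral (w : ℂ) : ℂ := ∫ y in Ioi (0 : ℝ), logTwoCosKernel w y

theorem hypInt_add_one_sub_hypInt_sub_one {a y : ℝ} (ha : a ≠ 0) (hy : y ≠ 0) (z : ℂ) :
    hypInt a (z + 1) y - hypInt a (z - 1) y = 2 * logTwoCosKernel (a * z) y := by
  have hs := sinh_ofReal_ne_zero hy
  have hs' := sinh_ofReal_mul_ofReal_ne_zero ha hy
  have hcosh : (y * (a * z) : ℂ) = a * y * z := by ring
  simp only [hypInt, logTwoCosKernel, mul_add, mul_sub, mul_one, sinh_add, sinh_sub, hcosh]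
  generalize sinh (y : ℂ) = s, sinh (a * y : ℂ) = s' at *
  field_simp
  ring

theorem logTwoCosKernel_eq_hypInt_sub {y : ℝ} (hy : y ≠ 0) (w : ℂ) :
    logTwoCosKernel w y = 1 / 2 * (hypInt 1 (w + 1) y - hypInt 1 (w - 1) y) := by
  rw [hypInt_add_one_sub_hypInt_sub_one one_ne_zero hy, ofReal_one, one_mul]
  ring

theorem hasDerivAt_logTwoCosKernel {y : ℝ} (hy : y ≠ 0) (w : ℂ) :
    HasDerivAt (logTwoCosKernel · y) (-(sinh (y * w) / sinh y)) w := by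
  have hy' : (y : ℂ) ≠ 0 := ofReal_ne_zero.2 hy
  refine ((((((hasDerivAt_id w).const_mul (y : ℂ)).ccosh).div_const (sinh y)).const_sub
    (1 / (y : ℂ))).div_const (y : ℂ)).congr_deriv ?_
  rw [mul_one, id, neg_div, mul_div_right_comm, mul_div_cancel_right₀ _ hy']

section Strip

variable {w : ℂ}

theorem abs_re_add_one_lt_and_abs_re_sub_one_lt {r : ℝ} (hw : |w.re| < r) :
    |(w + 1).re| < 1 + r ∧ |(w - 1).re| < 1 + r := by
  rw [abs_lt] at hw
  simp only [add_re, sub_re, one_re, abs_lt]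
  exact ⟨⟨by linarith, by linarith⟩, ⟨by linarith, by linarith⟩⟩

theorem integrableOn_logTwoCosKernel (hw : |w.re| < 1) :
    IntegrableOn (logTwoCosKernel w) (Ioi 0) := by
  obtain ⟨hadd, hsub⟩ := abs_re_add_one_lt_and_abs_re_sub_one_lt hw
  refine IntegrableOn.congr_fun (((integrableOn_hypInt one_pos (by rwa [inv_one])).sub
    (integrableOn_hypInt one_pos (by rwa [inv_one]))).const_mul (1 / 2))
    (fun y hy ↦ (logTwoCosKernel_eq_hypInt_sub (mem_Ioi.1 hy).ne' w).symm) measurableSet_Ioi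

theorem logTwoCosIntegral_eq_sub (hw : |w.re| < 1) :
    logTwoCosIntegral w = 1 / 2 * ((∫ y in Ioi (0 : ℝ), hypInt 1 (w + 1) y) -
      ∫ y in Ioi (0 : ℝ), hypInt 1 (w - 1) y) := by
  obtain ⟨hadd, hsub⟩ := abs_re_add_one_lt_and_abs_re_sub_one_lt hw
  rw [← integral_sub (integrableOn_hypInt one_pos (by rwa [inv_one]))
    (integrableOn_hypInt one_pos (by rwa [inv_one])), ← integral_const_mul]
  exact setIntegral_congr_fun measurableSet_Ioi
    fun y hy ↦ logTwoCosKernel_eq_hypInt_sub (mem_Ioi.1 hy).ne' w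

theorem hasDerivAt_logTwoCosIntegral (hw : |w.re| < 1) :
    IntegrableOn (fun y : ℝ ↦ sinh (y * w) / sinh y) (Ioi 0) ∧
      HasDerivAt logTwoCosIntegral (-∫ y in Ioi (0 : ℝ), sinh (y * w) / sinh y) w := by
  obtain ⟨hadd, hsub⟩ := abs_re_add_one_lt_and_abs_re_sub_one_lt hw
  obtain ⟨hint_add, hderiv_add⟩ :=
    hasDerivAt_integral_hypInt (z := w + 1) one_pos (by rwa [inv_one])
  obtain ⟨hint_sub, hderiv_sub⟩ :=
    hasDerivAt_integral_hypInt (z := w - 1) one_pos (by rwa [inv_one])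
  have deriv_eq : EqOn (fun y ↦ 1 / 2 * (deriv (hypInt 1 · y) (w + 1) -
      deriv (hypInt 1 · y) (w - 1))) (fun y : ℝ ↦ -(sinh (y * w) / sinh y)) (Ioi 0) := by
    intro y hy
    have hy0 : y ≠ 0 := (mem_Ioi.1 hy).ne'
    have hd (z : ℂ) := (differentiable_hypInt 1 y z).hasDerivAt
    refine HasDerivAt.unique ((((hd (w + 1)).comp_add_const w 1).sub
      ((hd (w - 1)).comp_sub_const w 1)).const_mul (1 / 2)) ?_
    exact (hasDerivAt_logTwoCosKernel hy0 w).congr_of_eventuallyEq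
      (Eventually.of_forall fun v ↦ (logTwoCosKernel_eq_hypInt_sub hy0 v).symm)
  have hint := IntegrableOn.congr_fun ((hint_add.sub hint_sub).const_mul (1 / 2)) deriv_eq
    measurableSet_Ioi
  refine ⟨hint.neg.congr_fun (fun y _ ↦ neg_neg _) measurableSet_Ioi, ?_⟩
  rw [← integral_neg, ← setIntegral_congr_fun measurableSet_Ioi deriv_eq, integral_const_mul,
    integral_sub hint_add hint_sub]
  refine (((hderiv_add.comp_add_const w 1).sub (hderiv_sub.comp_sub_const w 1)).const_mul
    (1 / 2)).congr_of_eventuallyEq ?_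
  have hopen : IsOpen {v : ℂ | |v.re| < 1} := isOpen_lt (by fun_prop) continuous_const
  filter_upwards [hopen.mem_nhds hw] with v hv using logTwoCosIntegral_eq_sub hv

end Strip

theorem tendsto_sum_one_div_add_one_div_pi_mul_cot {x : ℂ} (hx : x ∈ integerComplement) :
    Tendsto (fun N ↦ ∑ n ∈ Finset.range N, (1 / (x + n) + 1 / (x - (n + 1)))) atTop
      (𝓝 (Real.pi * cot (Real.pi * x))) := by
  have hshift : Tendsto (fun N : ℕ ↦ 1 / x - 1 / (x + N)) atTop (𝓝 (1 / x - 0)) := by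
    refine tendsto_const_nhds.sub ?_
    simp only [one_div]
    exact tendsto_inv₀_cobounded.comp
      ((tendsto_const_add_cobounded x).comp tendsto_natCast_atTop_cobounded)
  have hsum (N : ℕ) : ∑ n ∈ Finset.range N, (1 / (x + n) + 1 / (x - (n + 1))) =
      ∑ n ∈ Finset.range N, cotTerm x n + (1 / x - 1 / (x + N)) := by
    have htele := Finset.sum_range_sub' (fun n : ℕ ↦ 1 / (x + n)) N
    simp only [Nat.cast_zero, add_zero] at htele
    rw [← htele, ← Finset.sum_add_distrib]
    refine Finset.sum_congr rfl fun n _ ↦ ?_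
    rw [cotTerm, Nat.cast_add_one]
    ring
  simp only [hsum]
  simpa only [sub_zero, sub_add_cancel] using (tendsto_logDeriv_euler_cot_sub hx).add hshift

theorem tendsto_sum_one_div_sub_one_div_pi_div_two_mul_tan {w : ℂ}
    (hw : (1 - w) / 2 ∈ integerComplement) :
    Tendsto (fun N ↦ ∑ n ∈ Finset.range N, (1 / (2 * n + 1 - w) - 1 / (2 * n + 1 + w))) atTop
      (𝓝 (Real.pi / 2 * tan (Real.pi * w / 2))) := by
  have hcot : Real.pi / 2 * tan (Real.pi * w / 2) =
      1 / 2 * (Real.pi * cot (Real.pi * ((1 - w) / 2))) := by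
    have : (Real.pi * ((1 - w) / 2) : ℂ) = Real.pi / 2 - Real.pi * w / 2 := by ring
    rw [this, ← tan_inv_eq_cot, tan_pi_div_two_sub, inv_inv]
    ring
  rw [hcot]
  refine ((tendsto_sum_one_div_add_one_div_pi_mul_cot hw).const_mul (1 / 2)).congr fun N ↦ ?_
  rw [Finset.mul_sum]
  refine Finset.sum_congr rfl fun n _ ↦ ?_
  have hadd : (1 - w) / 2 + n = (2 * n + 1 - w) / 2 := by ring
  have hsub : (1 - w) / 2 - (n + 1) = -(2 * n + 1 + w) / 2 := by ring
  rw [hadd, hsub, one_div_div, one_div_div, div_neg]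
  ring

theorem tendsto_integral_exp_neg_two_mul_mul {f : ℝ → ℂ} (hf : IntegrableOn f (Ioi 0)) :
    Tendsto (fun N : ℕ ↦ ∫ y in Ioi (0 : ℝ), exp (-2 * N * y) * f y) atTop (𝓝 0) := by
  have hnorm (N : ℕ) (y : ℝ) : ‖exp (-2 * N * y)‖ = Real.exp (-2 * y) ^ N := by
    rw [norm_exp, ← Real.exp_nat_mul]
    norm_num
    ring_nf
  rw [← integral_zero ℝ ℂ (μ := volume.restrict (Ioi 0))]
  refine tendsto_integral_of_dominated_convergence (fun y ↦ ‖f y‖) (fun N ↦ ?_) hf.norm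
    (fun N ↦ ?_) ?_
  · exact (Continuous.aestronglyMeasurable (by fun_prop)).mul hf.aestronglyMeasurable
  · filter_upwards [ae_restrict_mem measurableSet_Ioi] with y hy
    rw [norm_mul, hnorm]
    refine mul_le_of_le_one_left (norm_nonneg _) (pow_le_one₀ (Real.exp_pos _).le ?_)
    exact Real.exp_le_one_iff.2 (by linarith [mem_Ioi.1 hy])
  · filter_upwards [ae_restrict_mem measurableSet_Ioi] with y hy
    have hexp : Real.exp (-2 * y) < 1 := Real.exp_lt_one_iff.2 (by linarith [mem_Ioi.1 hy])
    rw [tendsto_zero_iff_norm_tendsto_zero]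
    simp only [norm_mul, hnorm]
    simpa only [zero_mul] using
      (tendsto_pow_atTop_nhds_zero_of_lt_one (Real.exp_pos _).le hexp).mul_const ‖f y‖

theorem integrableOn_exp_neg_two_mul_mul {f : ℝ → ℂ} (hf : IntegrableOn f (Ioi 0)) (n : ℕ) :
    IntegrableOn (fun y : ℝ ↦ exp (-2 * n * y) * f y) (Ioi 0) := by
  refine hf.bdd_mul (c := 1) (Continuous.aestronglyMeasurable (by fun_prop)) ?_
  filter_upwards [ae_restrict_mem measurableSet_Ioi] with y hy
  rw [norm_exp]
  norm_num
  exact mul_nonneg (by positivity) (mem_Ioi.1 hy).le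

theorem exp_mul_sinh_div_sinh_sub {y : ℝ} (hy : y ≠ 0) (w : ℂ) (n : ℕ) :
    exp (-2 * n * y) * (sinh (y * w) / sinh y) -
        exp (-2 * (n + 1 : ℕ) * y) * (sinh (y * w) / sinh y) =
      exp (-(2 * n + 1 - w) * y) - exp (-(2 * n + 1 + w) * y) := by
  have hs := sinh_ofReal_ne_zero hy
  have hsub : exp (-2 * n * y) - exp (-2 * (n + 1 : ℕ) * y) =
      exp (-(2 * n + 1) * y) * (2 * sinh y) := by
    rw [two_sinh, mul_sub, ← exp_add, ← exp_add]
    push_cast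
    ring_nf
  calc _ = (exp (-2 * n * y) - exp (-2 * (n + 1 : ℕ) * y)) * (sinh (y * w) / sinh y) := by ring
    _ = exp (-(2 * n + 1) * y) * (2 * sinh (y * w)) := by
      rw [hsub]
      field_simp
    _ = _ := by
      rw [two_sinh, mul_sub, ← exp_add, ← exp_add]
      ring_nf

theorem integral_exp_sub_exp {w : ℂ} (hw : |w.re| < 1) (n : ℕ) :
    ∫ y in Ioi (0 : ℝ), (exp (-(2 * n + 1 - w) * y) - exp (-(2 * n + 1 + w) * y)) =
      1 / (2 * n + 1 - w) - 1 / (2 * n + 1 + w) := by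
  have hn : (0 : ℝ) ≤ n := n.cast_nonneg
  obtain ⟨hl, hu⟩ := abs_lt.1 hw
  have hsub : (-(2 * n + 1 - w) : ℂ).re < 0 := by simp; linarith [hn]
  have hadd : (-(2 * n + 1 + w) : ℂ).re < 0 := by simp; linarith [hn]
  rw [integral_sub (integrableOn_exp_mul_complex_Ioi hsub 0)
    (integrableOn_exp_mul_complex_Ioi hadd 0), integral_exp_mul_complex_Ioi hsub,
    integral_exp_mul_complex_Ioi hadd]
  simp only [ofReal_zero, mul_zero, exp_zero, neg_div_neg_eq]

section Strip

variable {w : ℂ}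

theorem one_sub_div_two_mem_integerComplement (hw : |w.re| < 1) :
    (1 - w) / 2 ∈ integerComplement := by
  rw [mem_integerComplement_iff]
  rintro ⟨n, hn⟩
  have hre : w.re = 1 - 2 * n := by
    have : w = ((1 - 2 * n : ℝ) : ℂ) := by push_cast; linear_combination 2 * hn
    rw [this, ofReal_re]
  rw [hre, abs_lt] at hw
  have hn0 : (0 : ℤ) < n := by exact_mod_cast (by linarith : (0 : ℝ) < n)
  have hn1 : n < 1 := by exact_mod_cast (by linarith : (n : ℝ) < 1)
  omega

theorem cos_pi_mul_div_two_ne_zero (hw : |w.re| < 1) : cos (Real.pi * w / 2) ≠ 0 := by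
  have : (Real.pi * w / 2 : ℂ) = Real.pi / 2 - Real.pi * ((1 - w) / 2) := by ring
  rw [this, cos_pi_div_two_sub]
  exact sin_pi_mul_ne_zero (one_sub_div_two_mem_integerComplement hw)

theorem integral_sinh_mul_div_sinh (hw : |w.re| < 1) :
    ∫ y in Ioi (0 : ℝ), sinh (y * w) / sinh y = Real.pi / 2 * tan (Real.pi * w / 2) := by
  have hint := (hasDerivAt_logTwoCosIntegral hw).1
  set f : ℝ → ℂ := fun y ↦ sinh (y * w) / sinh y
  set J : ℕ → ℂ := fun n ↦ ∫ y in Ioi (0 : ℝ), exp (-2 * n * y) * f y with hJ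
  have hdiff (n : ℕ) : J n - J (n + 1) = 1 / (2 * n + 1 - w) - 1 / (2 * n + 1 + w) := by
    rw [hJ, ← integral_exp_sub_exp hw, ← integral_sub (integrableOn_exp_neg_two_mul_mul hint n)
      (integrableOn_exp_neg_two_mul_mul hint (n + 1))]
    exact setIntegral_congr_fun measurableSet_Ioi
      fun y hy ↦ exp_mul_sinh_div_sinh_sub (mem_Ioi.1 hy).ne' w n
  have hJ0 : J 0 = ∫ y in Ioi (0 : ℝ), f y := by
    simp only [hJ, Nat.cast_zero, mul_zero, zero_mul, exp_zero, one_mul]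
  have hsum := tendsto_sum_one_div_sub_one_div_pi_div_two_mul_tan
    (one_sub_div_two_mem_integerComplement hw)
  simp only [← hdiff, Finset.sum_range_sub', hJ0] at hsum
  have hlim := (tendsto_integral_exp_neg_two_mul_mul hint).const_sub (∫ y in Ioi (0 : ℝ), f y)
  rw [sub_zero] at hlim
  exact tendsto_nhds_unique hlim hsum

theorem logTwoCosKernel_duplication {y : ℝ} (hy : y ≠ 0) (w : ℂ) :
    logTwoCosKernel w y =
      2 * (logTwoCosKernel ((w + 1) / 2) (2 * y) + logTwoCosKernel ((w - 1) / 2) (2 * y)) := by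
  have hy' : (y : ℂ) ≠ 0 := ofReal_ne_zero.2 hy
  have hs := sinh_ofReal_ne_zero hy
  have hc : cosh (y : ℂ) ≠ 0 := by
    rw [← ofReal_cosh]
    exact_mod_cast (Real.cosh_pos y).ne'
  have hadd : (2 * y * ((w + 1) / 2) : ℂ) = y * w + y := by ring
  have hsub : (2 * y * ((w - 1) / 2) : ℂ) = y * w - y := by ring
  simp only [logTwoCosKernel, ofReal_mul, ofReal_ofNat, hadd, hsub, cosh_add, cosh_sub,
    sinh_two_mul]
  field_simp
  ring

theorem logTwoCosIntegral_duplication (hw : |w.re| < 1) :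
    logTwoCosIntegral w = logTwoCosIntegral ((w + 1) / 2) + logTwoCosIntegral ((w - 1) / 2) := by
  obtain ⟨hadd, hsub⟩ := abs_re_add_one_lt_and_abs_re_sub_one_lt hw
  have half {v : ℂ} (hv : |v.re| < 1 + 1) : |(v / 2).re| < 1 := by
    rw [div_ofNat_re, abs_div, abs_two]
    linarith
  set f : ℝ → ℂ := fun y ↦ logTwoCosKernel ((w + 1) / 2) y + logTwoCosKernel ((w - 1) / 2) y
  calc logTwoCosIntegral w = ∫ y in Ioi (0 : ℝ), 2 * f (2 * y) :=
        setIntegral_congr_fun measurableSet_Ioi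
          fun y hy ↦ logTwoCosKernel_duplication (mem_Ioi.1 hy).ne' w
    _ = ∫ y in Ioi (0 : ℝ), f y := by
        rw [integral_const_mul, integral_comp_mul_left_Ioi f 0 two_pos, mul_zero, real_smul]
        push_cast
        ring
    _ = _ := integral_add (integrableOn_logTwoCosKernel (half hadd))
        (integrableOn_logTwoCosKernel (half hsub))

theorem exists_exp_logTwoCosIntegral_eq_mul_cos :
    ∃ c : ℂ, ∀ w : ℂ, |w.re| < 1 → exp (logTwoCosIntegral w) = c * cos (Real.pi * w / 2) := by
  set S : Set ℂ := {w | |w.re| < 1}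
  have hopen : IsOpen S := isOpen_lt (by fun_prop) continuous_const
  have hconn : IsPreconnected S := by
    have : S = reLm ⁻¹' Ioo (-1) 1 := by ext; simp [S, abs_lt]
    rw [this]
    exact ((convex_Ioo (-1 : ℝ) 1).linear_preimage reLm).isPreconnected
  set q : ℂ → ℂ := fun w ↦ exp (logTwoCosIntegral w) / cos (Real.pi * w / 2)
  have hderiv (w : ℂ) (hw : w ∈ S) : HasDerivAt q 0 w := by
    have hcos := cos_pi_mul_div_two_ne_zero hw
    have hF := (hasDerivAt_logTwoCosIntegral hw).2.cexp
    have hC := (((hasDerivAt_id w).const_mul (Real.pi : ℂ)).div_const 2).ccos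
    refine (hF.div hC hcos).congr_deriv ?_
    rw [integral_sinh_mul_div_sinh hw, tan, id]
    field_simp
    ring
  have h0 : (0 : ℂ) ∈ S := by simp [S]
  refine ⟨q 0, fun w hw ↦ ?_⟩
  have hconst : q w = q 0 := hopen.is_const_of_deriv_eq_zero hconn
    (fun v hv ↦ (hderiv v hv).differentiableAt.differentiableWithinAt)
    (fun v hv ↦ (hderiv v hv).deriv) hw h0
  rw [← hconst, div_mul_cancel₀ _ (cos_pi_mul_div_two_ne_zero hw)]

theorem exp_logTwoCosIntegral (hw : |w.re| < 1) :
    exp (logTwoCosIntegral w) = 2 * cos (Real.pi * w / 2) := by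
  obtain ⟨c, hc⟩ := exists_exp_logTwoCosIntegral_eq_mul_cos
  have hc0 : exp (logTwoCosIntegral 0) = c := by simpa using hc 0 (by simp)
  have hcos : cos (Real.pi / 4) ^ 2 = 1 / 2 := by
    have := cos_sq (Real.pi / 4)
    rw [show 2 * (Real.pi / 4 : ℂ) = Real.pi / 2 by ring, cos_pi_div_two] at this
    simpa using this
  -- Duplication at `w = 0` reads `c = (c cos (π/4)) (c cos (-π/4)) = c² / 2`.
  have hdup : c = c ^ 2 / 2 := by
    have h := congrArg exp (logTwoCosIntegral_duplication (w := 0) (by simp))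
    rw [exp_add, hc0, hc _ (by norm_num), hc _ (by norm_num)] at h
    rw [show (Real.pi * ((0 + 1) / 2) / 2 : ℂ) = Real.pi / 4 by ring,
      show (Real.pi * ((0 - 1) / 2) / 2 : ℂ) = -(Real.pi / 4) by ring, cos_neg] at h
    linear_combination h + c ^ 2 * hcos
  have hne : c ≠ 0 := hc0 ▸ exp_ne_zero _
  have : c = 2 := mul_left_cancel₀ hne (by linear_combination -2 * hdup)
  rw [hc w hw, this]

end Strip

/-! ### Continuation along a difference equation -/

/-- `f` solves the difference equation `f (z + 2) = m z * f z` on the strip `|Re z| < c`, without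
zeros there, and both `f` and the multiplier `m` have the symmetry of a hyperbolic gamma
function. The strip is wider than the period, so `f` can be continued along the equation. -/
structure IsStripSolution (c : ℝ) (m f : ℂ → ℂ) : Prop where
  one_lt : 1 < c
  differentiable_multiplier : Differentiable ℂ m
  multiplier_neg_add_two : ∀ z, m (-(z + 2)) = m z
  differentiableAt : ∀ z, |z.re| < c → DifferentiableAt ℂ f z
  ne_zero : ∀ z, |z.re| < c → f z ≠ 0
  map_add_two : ∀ z, |z.re| < c → |(z + 2).re| < c → f (z + 2) = m z * f z
  map_neg : ∀ z, |z.re| < c → f (-z) = (f z)⁻¹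

namespace IsStripSolution

/-- The value at `z` obtained from the value of `f` at `z - 2 * n` by `n` applications of
`f (z + 2) = m z * f z`. -/
def iterate (m f : ℂ → ℂ) (n : ℕ) (z : ℂ) : ℂ :=
  f (z - 2 * n) * ∏ j ∈ Finset.range n, m (z - 2 * (j + 1))

/-- The number of steps of length `2` that take `z` into the strip `-1 ≤ Re z < 1`; it is `0` if
`Re z < 1`. -/
def steps (z : ℂ) : ℕ := ⌊(z.re + 1) / 2⌋₊

/-- The continuation of a solution on the strip `|Re z| < c` to the half-plane `-c < Re z`. -/
def rightExtension (m f : ℂ → ℂ) (z : ℂ) : ℂ := iterate m f (steps z) z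

/-- The continuation of a solution to the whole plane: to the left half-plane it is extended by
`f (-z) = (f z)⁻¹`, with the value `0` at the poles. -/
def continuation (m f : ℂ → ℂ) (z : ℂ) : ℂ :=
  if 0 ≤ z.re then rightExtension m f z else (rightExtension m f (-z))⁻¹

/-- The zeros of the multiplier in the half-plane `-1 ≤ Re z`, moved to the right by the positive
multiples of `2`. These are the zeros of the continuation. -/
def translatedZeros (m : ℂ → ℂ) : Set ℂ :=
  {z | ∃ j : ℕ, -1 ≤ (z - 2 * (j + 1)).re ∧ m (z - 2 * (j + 1)) = 0}

theorem re_sub_two_mul_natCast (z : ℂ) (n : ℕ) : (z - 2 * n).re = z.re - 2 * n := by simp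

theorem lt_steps_iff {z : ℂ} {j : ℕ} : j < steps z ↔ -1 ≤ (z - 2 * (j + 1)).re := by
  rw [steps, ← Nat.succ_le_iff, Nat.le_floor_iff' j.succ_ne_zero, ← Nat.cast_succ,
    re_sub_two_mul_natCast]
  constructor <;> intro h <;> linarith

variable {c : ℝ} {m f : ℂ → ℂ}

section

variable (h : IsStripSolution c m f) {z : ℂ}
include h

theorem abs_re_sub_steps_lt (hz : -c < z.re) : |z.re - 2 * steps z| < c := by
  have hc := h.one_lt
  rcases lt_or_ge z.re (-1) with hz' | hz'
  · rw [steps, Nat.floor_of_nonpos (by linarith), Nat.cast_zero, mul_zero, sub_zero, abs_lt]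
    exact ⟨hz, by linarith⟩
  · have hle := Nat.floor_le (show 0 ≤ (z.re + 1) / 2 by linarith)
    have hlt := Nat.lt_floor_add_one ((z.re + 1) / 2)
    rw [steps, abs_lt]
    constructor <;> linarith

theorem iterate_succ {n : ℕ} (hn : |z.re - 2 * n| < c) (hn' : |z.re - 2 * (n + 1 : ℕ)| < c) :
    iterate m f (n + 1) z = iterate m f n z := by
  have hstep := h.map_add_two (z - 2 * (n + 1 : ℕ)) (by rwa [re_sub_two_mul_natCast])
  have hshift : z - 2 * (n + 1 : ℕ) + 2 = z - 2 * n := by push_cast; ring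
  rw [hshift, re_sub_two_mul_natCast] at hstep
  rw [iterate, iterate, hstep hn, Finset.prod_range_succ, Nat.cast_succ]
  ring

theorem iterate_eq_of_le {n k : ℕ} (hnk : n ≤ k) (hn : |z.re - 2 * n| < c)
    (hk : |z.re - 2 * k| < c) : iterate m f k z = iterate m f n z := by
  induction k, hnk using Nat.le_induction with
  | base => rfl
  | succ k hnk ih =>
    have hnk' : (n : ℝ) ≤ k := by exact_mod_cast hnk
    have hk' : |z.re - 2 * k| < c := by
      rw [abs_lt] at hn hk ⊢
      push_cast at hk
      constructor <;> linarith
    rw [h.iterate_succ hk' hk, ih hk']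

theorem rightExtension_eq_iterate {n : ℕ} (hn : |z.re - 2 * n| < c) :
    rightExtension m f z = iterate m f n z := by
  have hz : -c < z.re := by
    have : (0 : ℝ) ≤ n := n.cast_nonneg
    linarith [(abs_lt.1 hn).1]
  have hsteps := h.abs_re_sub_steps_lt hz
  rcases le_total n (steps z) with hle | hle
  · exact h.iterate_eq_of_le hle hn hsteps
  · exact (h.iterate_eq_of_le hle hsteps hn).symm

theorem rightExtension_eq (hz : |z.re| < c) : rightExtension m f z = f z := by
  rw [h.rightExtension_eq_iterate (n := 0) (by simpa using hz)]
  simp [iterate]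

theorem rightExtension_add_two (hz : -c < z.re) :
    rightExtension m f (z + 2) = m z * rightExtension m f z := by
  have hsteps := h.abs_re_sub_steps_lt hz
  have hre : (z + 2).re - 2 * (steps z + 1 : ℕ) = z.re - 2 * steps z := by
    rw [add_re, re_ofNat]; push_cast; ring
  have hshift (x : ℂ) : z + 2 - 2 * (x + 1) = z - 2 * x := by ring
  rw [h.rightExtension_eq_iterate (n := steps z + 1) (by rwa [hre]), rightExtension, iterate,
    iterate, Finset.prod_range_succ', Nat.cast_succ]
  simp only [hshift, Nat.cast_succ, Nat.cast_zero, mul_zero, sub_zero]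
  ring

theorem differentiableAt_rightExtension (hz : -c < z.re) :
    DifferentiableAt ℂ (rightExtension m f) z := by
  have hsteps := h.abs_re_sub_steps_lt hz
  have hm := h.differentiable_multiplier
  have hf : DifferentiableAt ℂ f (z - 2 * steps z) :=
    h.differentiableAt _ (by rwa [re_sub_two_mul_natCast])
  have hiterate : DifferentiableAt ℂ (iterate m f (steps z)) z :=
    (hf.comp z (f := fun w : ℂ ↦ w - 2 * steps z) (by fun_prop)).mul
      (DifferentiableAt.fun_finsetProd fun j _ ↦ by fun_prop)
  refine hiterate.congr_of_eventuallyEq ?_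
  have hopen : IsOpen {w : ℂ | |w.re - 2 * steps z| < c} :=
    isOpen_lt (by fun_prop) continuous_const
  filter_upwards [hopen.mem_nhds hsteps] with w hw using h.rightExtension_eq_iterate hw

theorem analyticOnNhd_rightExtension : AnalyticOnNhd ℂ (rightExtension m f) {z | -c < z.re} :=
  DifferentiableOn.analyticOnNhd
    (fun _ hz ↦ (h.differentiableAt_rightExtension hz).differentiableWithinAt)
    (isOpen_lt continuous_const continuous_re)

theorem rightExtension_eq_zero_iff (hz : -c < z.re) :
    rightExtension m f z = 0 ↔ z ∈ translatedZeros m := by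
  have hf : f (z - 2 * steps z) ≠ 0 :=
    h.ne_zero _ (by rw [re_sub_two_mul_natCast]; exact h.abs_re_sub_steps_lt hz)
  simp only [rightExtension, iterate, mul_eq_zero, hf, false_or, Finset.prod_eq_zero_iff,
    Finset.mem_range, lt_steps_iff, translatedZeros, mem_ofPred_eq]

theorem eventually_rightExtension_ne_zero (hz : -c < z.re) :
    ∀ᶠ w in 𝓝[≠] z, rightExtension m f w ≠ 0 := by
  have hE := h.analyticOnNhd_rightExtension
  refine (hE z hz).eventually_eq_zero_or_eventually_ne_zero.resolve_left fun hzero ↦ ?_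
  have hc := h.one_lt
  have h0 : |(0 : ℂ).re| < c := by rw [zero_re, abs_zero]; linarith
  refine h.ne_zero 0 h0 ?_
  rw [← h.rightExtension_eq h0]
  exact hE.eqOn_zero_of_preconnected_of_eventuallyEq_zero
    (convex_halfSpace_re_gt (-c)).isPreconnected hz hzero (abs_lt.1 h0).1

theorem le_re_of_mem_translatedZeros (hz : z ∈ translatedZeros m) : c ≤ z.re := by
  obtain ⟨j, hj, -⟩ := id hz
  rw [← Nat.cast_succ, re_sub_two_mul_natCast, Nat.cast_succ] at hj
  have hc := h.one_lt
  have hj0 : (0 : ℝ) ≤ j := j.cast_nonneg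
  by_contra! hlt
  have hstrip : |z.re| < c := abs_lt.2 ⟨by linarith [hj0], hlt⟩
  refine h.ne_zero z hstrip ?_
  rw [← h.rightExtension_eq hstrip]
  exact (h.rightExtension_eq_zero_iff (by linarith)).2 hz

theorem rightExtension_neg (hz : |z.re| < c) :
    rightExtension m f (-z) = (rightExtension m f z)⁻¹ := by
  rw [h.rightExtension_eq hz, h.rightExtension_eq (by rwa [neg_re, abs_neg]), h.map_neg z hz]

theorem continuation_eq_rightExtension (hz : -c < z.re) :
    continuation m f z = rightExtension m f z := by
  rw [continuation]
  split_ifs with hz0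
  · rfl
  · rw [h.rightExtension_neg (abs_lt.2 ⟨hz, by linarith [h.one_lt]⟩), inv_inv]

theorem continuation_neg (z : ℂ) : continuation m f (-z) = (continuation m f z)⁻¹ := by
  wlog hz : 0 ≤ z.re generalizing z
  · rw [← inv_inv (continuation m f (-z)), ← this (-z) (by rw [neg_re]; linarith), neg_neg]
  rcases hz.eq_or_lt with hz0 | hz0
  · have hc := h.one_lt
    rw [h.continuation_eq_rightExtension (by rw [neg_re]; linarith),
      h.continuation_eq_rightExtension (by linarith),
      h.rightExtension_neg (by rw [← hz0, abs_zero]; linarith)]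
  · rw [continuation, continuation, if_neg (by rw [neg_re]; linarith), if_pos hz, neg_neg]

theorem continuation_eq_inv_rightExtension_neg (hz : z.re < c) :
    continuation m f z = (rightExtension m f (-z))⁻¹ := by
  rw [← h.continuation_eq_rightExtension (by rwa [neg_re, neg_lt_neg_iff]), h.continuation_neg,
    inv_inv]

theorem continuation_eq (hz : |z.re| < c) : continuation m f z = f z := by
  rw [h.continuation_eq_rightExtension (abs_lt.1 hz).1, h.rightExtension_eq hz]

theorem analyticAt_continuation_of_neg_lt_re (hz : -c < z.re) :
    AnalyticAt ℂ (continuation m f) z := by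
  refine (h.analyticOnNhd_rightExtension z hz).congr ?_
  filter_upwards [(isOpen_lt continuous_const continuous_re).mem_nhds hz] with w hw using
    (h.continuation_eq_rightExtension hw).symm

theorem continuation_eq_zero_iff (hz : -z ∉ translatedZeros m) :
    continuation m f z = 0 ↔ z ∈ translatedZeros m := by
  have hc := h.one_lt
  rcases lt_or_ge (-c) z.re with hre | hre
  · rw [h.continuation_eq_rightExtension hre, h.rightExtension_eq_zero_iff hre]
  · have hne : continuation m f z ≠ 0 := by
      have hneg : -c < (-z).re := by rw [neg_re]; linarith
      rw [h.continuation_eq_inv_rightExtension_neg (by linarith)]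
      exact inv_ne_zero ((h.rightExtension_eq_zero_iff hneg).not.2 hz)
    exact iff_of_false hne fun hmem ↦ by linarith [h.le_re_of_mem_translatedZeros hmem]

theorem continuation_eq_inv_comp_neg :
    continuation m f = (continuation m f ∘ Neg.neg)⁻¹ := by
  funext w
  rw [Pi.inv_apply, Function.comp_apply, h.continuation_neg, inv_inv]

theorem analyticAt_continuation_comp_neg (hz : z.re < c) :
    AnalyticAt ℂ (continuation m f ∘ Neg.neg) z :=
  (h.analyticAt_continuation_of_neg_lt_re (by rwa [neg_re, neg_lt_neg_iff])).comp (f := Neg.neg)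
    analyticAt_id.neg

theorem meromorphicAt_continuation (z : ℂ) : MeromorphicAt (continuation m f) z := by
  have hc := h.one_lt
  rcases lt_or_ge (-c) z.re with hre | hre
  · exact (h.analyticAt_continuation_of_neg_lt_re hre).meromorphicAt
  · rw [h.continuation_eq_inv_comp_neg]
    exact (h.analyticAt_continuation_comp_neg (by linarith)).meromorphicAt.inv

theorem analyticAt_continuation (hz : -z ∉ translatedZeros m) :
    AnalyticAt ℂ (continuation m f) z := by
  have hc := h.one_lt
  rcases lt_or_ge (-c) z.re with hre | hre
  · exact h.analyticAt_continuation_of_neg_lt_re hre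
  · rw [h.continuation_eq_inv_comp_neg]
    refine (h.analyticAt_continuation_comp_neg (by linarith)).inv ?_
    have hneg : -c < (-z).re := by rw [neg_re]; linarith
    rw [Function.comp_apply, h.continuation_eq_rightExtension hneg]
    exact (h.rightExtension_eq_zero_iff hneg).not.2 hz

theorem tendsto_norm_continuation_atTop (hz : -z ∈ translatedZeros m) :
    Tendsto (fun w ↦ ‖continuation m f w‖) (𝓝[≠] z) atTop := by
  have hc := h.one_lt
  have hle := h.le_re_of_mem_translatedZeros hz
  have hre : -c < (-z).re := by linarith
  have hlim : Tendsto (rightExtension m f) (𝓝[≠] (-z)) (𝓝[≠] 0) := by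
    refine tendsto_nhdsWithin_iff.2 ⟨?_, h.eventually_rightExtension_ne_zero hre⟩
    rw [← (h.rightExtension_eq_zero_iff hre).2 hz]
    exact (h.differentiableAt_rightExtension hre).continuousAt.mono_left nhdsWithin_le_nhds
  have hneg : Tendsto Neg.neg (𝓝[≠] z) (𝓝[≠] (-z)) :=
    tendsto_nhdsWithin_iff.2 ⟨continuous_neg.continuousAt.mono_left nhdsWithin_le_nhds,
      eventually_nhdsWithin_of_forall fun w hw ↦ neg_injective.ne hw⟩
  refine (tendsto_norm_cobounded_atTop.comp
    (tendsto_inv₀_nhdsNE_zero.comp (hlim.comp hneg))).congr' ?_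
  have hlt : z.re < c := by rw [neg_re] at hre; linarith
  filter_upwards [nhdsWithin_le_nhds ((isOpen_lt continuous_re continuous_const).mem_nhds hlt)]
    with w hw
  rw [h.continuation_eq_inv_rightExtension_neg hw]
  rfl

theorem continuation_add_two (hz : -z ∉ translatedZeros m) :
    continuation m f (z + 2) = m z * continuation m f z := by
  have hc := h.one_lt
  rcases lt_or_ge (-c) z.re with hre | hre
  · have hre' : -c < (z + 2).re := by rw [add_re, re_ofNat]; linarith
    rw [h.continuation_eq_rightExtension hre, h.continuation_eq_rightExtension hre',
      h.rightExtension_add_two hre]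
  · have hneg : -c < (-z).re := by rw [neg_re]; linarith
    have hneg' : -c < (-(z + 2)).re := by rw [neg_re, add_re, re_ofNat]; linarith
    have hstep := h.rightExtension_add_two hneg'
    rw [h.multiplier_neg_add_two, show -(z + 2) + 2 = -z by ring] at hstep
    have hne : rightExtension m f (-z) ≠ 0 := (h.rightExtension_eq_zero_iff hneg).not.2 hz
    rw [h.continuation_eq_inv_rightExtension_neg (by rw [add_re, re_ofNat]; linarith),
      h.continuation_eq_inv_rightExtension_neg (by linarith), hstep,
      mul_inv, mul_inv_cancel_left₀ (left_ne_zero_of_mul (hstep ▸ hne))]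

end

end IsStripSolution

/-! ### The hyperbolic gamma function -/

theorem I_mul_hypGammaArg (a : ℝ) (z : ℂ) :
    I * hypGammaArg a z = 1 / 2 * ∫ y in Ioi (0 : ℝ), hypInt a z y := by
  rw [hypGammaArg, ← mul_assoc, mul_inv, mul_left_comm, mul_inv_cancel₀ I_ne_zero, mul_one,
    one_div]

theorem hypGammaStrip_neg_left (a : ℝ) : hypGammaStrip (-a) = hypGammaStrip a := by
  funext z
  simp only [hypGammaStrip, hypGammaArg, hypInt_neg_left]

theorem hypGammaStrip_neg_right (a : ℝ) (z : ℂ) : hypGammaStrip a (-z) = (hypGammaStrip a z)⁻¹ := by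
  simp only [hypGammaStrip, I_mul_hypGammaArg, hypInt_neg_right, Pi.neg_apply, integral_neg,
    mul_neg, exp_neg]

section

variable {a : ℝ} {z : ℂ}

theorem differentiableAt_hypGammaStrip (ha : 0 < a) (hz : |z.re| < 1 + a⁻¹) :
    DifferentiableAt ℂ (hypGammaStrip a) z := by
  have hint := (hasDerivAt_integral_hypInt ha hz).2.differentiableAt
  simp only [funext fun w ↦ hypGammaStrip.eq_1 a w, I_mul_hypGammaArg]
  exact (hint.const_mul _).cexp

theorem I_mul_hypGammaArg_add_one (ha : 0 < a) (hz : |z.re| < a⁻¹) :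
    I * hypGammaArg a (z + 1) = logTwoCosIntegral (a * z) + I * hypGammaArg a (z - 1) := by
  obtain ⟨hadd, hsub⟩ := abs_re_add_one_lt_and_abs_re_sub_one_lt hz
  rw [← sub_eq_iff_eq_add, I_mul_hypGammaArg, I_mul_hypGammaArg, ← mul_sub,
    ← integral_sub (integrableOn_hypInt ha hadd) (integrableOn_hypInt ha hsub),
    setIntegral_congr_fun measurableSet_Ioi
      fun y hy ↦ hypInt_add_one_sub_hypInt_sub_one ha.ne' (mem_Ioi.1 hy).ne' z,
    integral_const_mul, logTwoCosIntegral]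
  ring

theorem hypGammaStrip_add_one (ha : 0 < a) (hz : |z.re| < a⁻¹) :
    hypGammaStrip a (z + 1) = 2 * cos (Real.pi * (a * z) / 2) * hypGammaStrip a (z - 1) := by
  have haz : |(a * z : ℂ).re| < 1 := by
    rw [re_ofReal_mul, abs_mul, abs_of_pos ha, ← mul_inv_cancel₀ ha.ne']
    gcongr
  rw [hypGammaStrip, I_mul_hypGammaArg_add_one ha hz, exp_add, exp_logTwoCosIntegral haz,
    hypGammaStrip]

end

/-- The multiplier `2 cos (π (z + 1) τ / 2)` in the difference equation of `G_τ`. -/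
def hypMultiplier (τ : ℝ) (z : ℂ) : ℂ := 2 * cos (Real.pi * (z + 1) * τ / 2)

theorem isStripSolution_hypGammaStrip {τ : ℝ} (hτ : τ < 0) :
    IsStripSolution (1 - τ⁻¹) (hypMultiplier τ) (hypGammaStrip τ) := by
  obtain ⟨a, rfl⟩ : ∃ a, τ = -a := ⟨-τ, (neg_neg τ).symm⟩
  have ha : 0 < a := neg_lt_zero.1 hτ
  rw [inv_neg, sub_neg_eq_add, hypGammaStrip_neg_left]
  refine ⟨by linarith [inv_pos.2 ha], ?_, fun z ↦ ?_, fun z ↦ differentiableAt_hypGammaStrip ha,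
    fun z _ ↦ exp_ne_zero _, fun z hz hz' ↦ ?_, fun z _ ↦ hypGammaStrip_neg_right a z⟩
  · unfold hypMultiplier
    fun_prop
  · rw [hypMultiplier, hypMultiplier, ← cos_neg]
    ring_nf
  · have hre : |(z + 1).re| < a⁻¹ := by
      rw [abs_lt] at hz hz' ⊢
      simp only [add_re, one_re, re_ofNat] at hz' ⊢
      constructor <;> linarith
    have h := hypGammaStrip_add_one ha hre
    rw [show z + 1 + 1 = z + 2 by ring, add_sub_cancel_right] at h
    rw [h, hypMultiplier, ← cos_neg]
    push_cast
    ring_nf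

theorem hypMultiplier_eq_zero_iff {τ : ℝ} (hτ : τ ≠ 0) {z : ℂ} :
    hypMultiplier τ z = 0 ↔ ∃ q : ℤ, z = -1 + (2 * q + 1) * (τ : ℂ)⁻¹ := by
  have hτ' : (τ : ℂ) ≠ 0 := ofReal_ne_zero.2 hτ
  have hπ : (Real.pi : ℂ) ≠ 0 := ofReal_ne_zero.2 Real.pi_ne_zero
  rw [hypMultiplier, mul_eq_zero, or_iff_right two_ne_zero, cos_eq_zero_iff]
  refine exists_congr fun q ↦ ⟨fun h ↦ ?_, ?_⟩
  · have hmul : (z + 1) * τ = 2 * q + 1 :=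
      mul_left_cancel₀ hπ (by linear_combination 2 * h)
    rw [← hmul, mul_inv_cancel_right₀ hτ']
    ring
  · rintro rfl
    field_simp
    ring

theorem translatedZeros_hypMultiplier {τ : ℝ} (hτ : τ < 0) :
    IsStripSolution.translatedZeros (hypMultiplier τ) = hypZeros τ := by
  have hre (q : ℤ) : -1 ≤ (-1 + (2 * q + 1) * (τ : ℂ)⁻¹).re ↔ q + 1 ≤ 0 := by
    have : (-1 + (2 * q + 1) * (τ : ℂ)⁻¹).re = -1 + (2 * q + 1) * τ⁻¹ := by
      rw [← ofReal_re (-1 + (2 * q + 1) * τ⁻¹)]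
      push_cast
      rfl
    rw [this, le_add_iff_nonneg_right, ← div_eq_mul_inv, le_div_iff_of_neg hτ, zero_mul]
    norm_cast
    omega
  ext z
  constructor
  · rintro ⟨j, hj, hzero⟩
    obtain ⟨q, hq⟩ := (hypMultiplier_eq_zero_iff hτ.ne).1 hzero
    refine ⟨j, q + 1, j.cast_nonneg, (hre q).1 (hq ▸ hj), ?_⟩
    push_cast
    linear_combination hq
  · rintro ⟨k, l, hk, hl, hz⟩
    lift k to ℕ using hk
    have hq : z - 2 * (k + 1) = -1 + (2 * (l - 1 : ℤ) + 1) * (τ : ℂ)⁻¹ := by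
      push_cast at hz ⊢
      linear_combination hz
    exact ⟨k, hq ▸ (hre _).2 (by omega), (hypMultiplier_eq_zero_iff hτ.ne).2 ⟨_, hq⟩⟩

theorem mem_hypPoles_iff {τ : ℝ} {z : ℂ} : z ∈ hypPoles τ ↔ -z ∈ hypZeros τ := by
  constructor <;> rintro ⟨k, l, hk, hl, hz⟩ <;> refine ⟨-k, -l, by omega, by omega, ?_⟩ <;>
    push_cast <;> linear_combination -hz

/-- The hyperbolic gamma function extends to a meromorphic function on `ℂ`,
satisfying `G_τ(z+2) = 2cos(π(z+1)τ/2)·G_τ(z)` (away from its poles), whose zeros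
are exactly the points `1 − τ⁻¹ + 2ℤ_{≥0} + 2τ⁻¹ℤ_{≤0}` and whose poles are exactly
the points `−1 + τ⁻¹ + 2ℤ_{≤0} + 2τ⁻¹ℤ_{≥0}`. -/
theorem hyperbolic_gamma_meromorphic_continuation (τ : ℝ) (hτ : τ < 0) :
    ∃ G : ℂ → ℂ,
      (∀ z : ℂ, |z.re| < 1 - τ⁻¹ → G z = hypGammaStrip τ z) ∧
      (∀ z : ℂ, z ∉ hypPoles τ →
        G (z + 2) = 2 * Complex.cos ((Real.pi : ℂ) * (z + 1) * (τ : ℂ) / 2) * G z) ∧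
      MeromorphicOn G Set.univ ∧
      (∀ z : ℂ, z ∉ hypPoles τ → AnalyticAt ℂ G z) ∧
      (∀ z ∈ hypPoles τ, Tendsto (fun w => ‖G w‖) (𝓝[≠] z) atTop) ∧
      (∀ z : ℂ, z ∉ hypPoles τ → (G z = 0 ↔ z ∈ hypZeros τ)) := by
  have h := isStripSolution_hypGammaStrip hτ
  simp only [mem_hypPoles_iff, ← translatedZeros_hypMultiplier hτ]
  refine ⟨IsStripSolution.continuation (hypMultiplier τ) (hypGammaStrip τ),
    fun z ↦ h.continuation_eq, fun z ↦ h.continuation_add_two,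
    fun z _ ↦ h.meromorphicAt_continuation z, fun z ↦ h.analyticAt_continuation,
    fun z ↦ h.tendsto_norm_continuation_atTop, fun z ↦ h.continuation_eq_zero_iff⟩
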